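/- Let θ : S → R be a ring extension. Then the following three statements are equivalent: (1) the left S-module R is reflexive and there is an isomorphism Hom_S(R,S) ≅ R of R-S-bimodules; (2) there exists a reflexive homomorphism for θ, i.e. an additive map φ : R → S with φ(θ(s)r) = sφ(r) and φ(rθ(s)) = φ(r)s for all s ∈ S, r ∈ R, such that both induced maps l_φ : R → Hom_S(R,S), l_φ(w)(r) = φ(rw), and r_φ : R → Hom_{Sᵒᵖ}(R,S), r_φ(w)(r) = φ(wr), are bijective; (3) the right S-module R is reflexive and there is an isomorphism Hom_{Sᵒᵖ}(R,S) ≅ R of S-R-bimodules. -/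

import Mathlib

/- STATEMENT 0: For a ring extension θ : S → R, the following are equivalent:
(1) the left S-module R is reflexive and Hom_S(R,S) ≅ R as R-S-bimodules;
(2) there is a reflexive homomorphism φ : R → S for θ;
(3) the right S-module R is reflexive and Hom_{Sᵒᵖ}(R,S) ≅ R as S-R-bimodules. -/

universe u v

/-- The evaluation map `X → Hom_{Sᵒᵖ}(Hom_S(X,S), S)`, `x ↦ (f ↦ f x)`. -/
def evalFun (S : Type u) [Ring S] (X : Type v) [AddCommGroup X] [Module S X] :
    X → ((X →ₗ[S] S) →ₗ[Sᵐᵒᵖ] S) := fun x =>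
  { toFun := fun f => f x
    map_add' := fun _ _ => rfl
    map_smul' := fun _ _ => rfl }

/-- A left `S`-module is reflexive if the evaluation map into its double dual is bijective. -/
def IsReflexiveMod (S : Type u) [Ring S] (X : Type v) [AddCommGroup X] [Module S X] : Prop :=
  Function.Bijective (evalFun S X)

/-- `φ : R → S` is a reflexive homomorphism for the ring extension `θ : S →+* R`:
it is additive, `S`-bilinear with respect to `θ`, and the induced maps
`l_φ : R → Hom_S(R,S)`, `w ↦ (r ↦ φ (r * w))`, and `r_φ : R → Hom_{Sᵒᵖ}(R,S)`,
`w ↦ (r ↦ φ (w * r))`, are bijective (bijectivity onto the set of left,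
resp. right, `S`-linear maps `R → S` is expressed elementwise). -/
def IsReflexiveHom {S : Type u} {R : Type v} [Ring S] [Ring R] (θ : S →+* R)
    (φ : R → S) : Prop :=
  (∀ a b : R, φ (a + b) = φ a + φ b) ∧
  (∀ (s : S) (r : R), φ (θ s * r) = s * φ r) ∧
  (∀ (s : S) (r : R), φ (r * θ s) = φ r * s) ∧
  Function.Injective (fun w : R => (fun r : R => φ (r * w))) ∧
  (∀ g : R → S, ((∀ a b : R, g (a + b) = g a + g b) ∧
      ∀ (s : S) (r : R), g (θ s * r) = s * g r) → ∃ w : R, ∀ r, g r = φ (r * w)) ∧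
  Function.Injective (fun w : R => (fun r : R => φ (w * r))) ∧
  (∀ g : R → S, ((∀ a b : R, g (a + b) = g a + g b) ∧
      ∀ (s : S) (r : R), g (r * θ s) = g r * s) → ∃ w : R, ∀ r, g r = φ (w * r))

/-!
A bimodule homomorphism `φ : R → S` gives a pairing `(w, r) ↦ φ (w * r)` on `R`, with `l_φ` and
`r_φ` as its two adjoints. For any pairing of a left module `X` with a right module `Y`, if
`Y → Hom_S(X,S)` is bijective, then it turns the evaluation map of `X` into the other adjoint
`X → Hom_{Sᵒᵖ}(Y,S)`, so `X` is reflexive iff that adjoint is bijective. On the other hand, a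
bimodule isomorphism `Hom_S(R,S) ≅ R` is the inverse of `l_φ` for `φ` the functional corresponding
to `1`.

Everything works with an arbitrary bimodule `D` as target instead of `S`. Writing right actions as
left actions of a second ring `B` makes the two sides mirror images of each other.
-/

open Function MulOpposite

theorem bijective_iff_injective_and_forall_isLinearMap {A D X Y : Type*} [Semiring A]
    [AddCommMonoid D] [Module A D] [AddCommMonoid X] [Module A X] (F : Y → X →ₗ[A] D) :
    Bijective F ↔ Injective (fun y x => F y x) ∧
      ∀ g : X → D, IsLinearMap A g → ∃ y, ∀ x, g x = F y x := by
  refine and_congr (DFunLike.coe_injective.of_comp_iff F).symm ⟨fun hF g hg => ?_, fun hF f => ?_⟩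
  · obtain ⟨y, hy⟩ := hF (IsLinearMap.mk' g hg)
    exact ⟨y, fun x => (LinearMap.congr_fun hy x).symm⟩
  · obtain ⟨y, hy⟩ := hF f f.isLinear
    exact ⟨y, LinearMap.ext fun x => (hy x).symm⟩

section Pairing

variable {A B D X Y : Type*} [Semiring A] [Semiring B]
  [AddCommMonoid D] [Module A D] [Module B D] [SMulCommClass A B D]
  [AddCommMonoid X] [Module A X] [AddCommMonoid Y] [Module B Y]

variable (A B D X) in
/-- The `A`-module `X` is reflexive with respect to the dualizing bimodule `D`: it is isomorphic to
its double `D`-dual by evaluation. A right action on `D` is encoded as a left action of `B`, so that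
`A = S`, `B = Sᵐᵒᵖ`, `D = S` is reflexivity of left `S`-modules, and `A = Sᵐᵒᵖ`, `B = S`, `D = S`
reflexivity of right `S`-modules. -/
def IsReflexiveWrt : Prop :=
  Bijective (LinearMap.applyₗ' B : X →+ (X →ₗ[A] D) →ₗ[B] D)

theorem isReflexiveWrt_iff_bijective_of_bijective_flip [SMulCommClass B A D]
    (β : X →ₗ[A] Y →ₗ[B] D) (hβ : Bijective β.flip) :
    IsReflexiveWrt A B D X ↔ Bijective β := by
  let e : Y ≃ₗ[B] (X →ₗ[A] D) := LinearEquiv.ofBijective β.flip hβ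
  let precomp : ((X →ₗ[A] D) →ₗ[B] D) ≃+ (Y →ₗ[B] D) :=
    e.symm.arrowCongrAddEquiv (LinearEquiv.refl B D)
  have hfactor : (β : X → Y →ₗ[B] D) = precomp ∘ LinearMap.applyₗ' B := rfl
  rw [IsReflexiveWrt, hfactor, precomp.bijective.of_comp_iff']

end Pairing

section MulPairing

variable {A B D R : Type*} [Semiring A] [Semiring B] [Semiring R]
  [AddCommMonoid D] [Module A D] [Module B D] [SMulCommClass B A D]
  [Module A R] [IsScalarTower A R R] [Module B R] [SMulCommClass B R R]

/-- The pairing `(w, r) ↦ φ (w * r)` on `R` attached to a bimodule homomorphism `φ : R → D`. It is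
the map `r_φ`, and its flip is the map `l_φ`. -/
def mulPairing {φ : R → D} (hA : IsLinearMap A φ) (hB : IsLinearMap B φ) :
    R →ₗ[A] R →ₗ[B] D :=
  LinearMap.mk₂' A B (fun w r => φ (w * r))
    (fun w w' r => by rw [add_mul, hA.map_add])
    (fun a w r => by rw [smul_mul_assoc, hA.map_smul])
    (fun w r r' => by rw [mul_add, hA.map_add])
    (fun b w r => by rw [mul_smul_comm, hB.map_smul])

variable (A B) in
/-- Reflexive homomorphisms `φ : R → D` with values in an arbitrary bimodule `D`: bimodule
homomorphisms for which `r_φ` and `l_φ` are both bijective. -/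
def IsReflexiveForm (φ : R → D) : Prop :=
  ∃ (hA : IsLinearMap A φ) (hB : IsLinearMap B φ),
    Bijective (mulPairing hA hB) ∧ Bijective (mulPairing hA hB).flip

theorem exists_dual_linearEquiv_mulLeft_iff :
    (∃ Ψ : (R →ₗ[B] D) ≃ₗ[A] R, ∀ a f, Ψ (f ∘ₗ LinearMap.mulLeft B a) = Ψ f * a) ↔
      ∃ (φ : R → D) (hA : IsLinearMap A φ) (hB : IsLinearMap B φ),
        Bijective (mulPairing hA hB) := by
  constructor
  · rintro ⟨Ψ, hΨ⟩
    let φ : R →ₗ[B] D := Ψ.symm 1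
    have hΨφ (w : R) : Ψ (φ ∘ₗ LinearMap.mulLeft B w) = w := by
      rw [hΨ, Ψ.apply_symm_apply, one_mul]
    have hA : IsLinearMap A φ := by
      refine ⟨map_add φ, fun a r => ?_⟩
      have ha : φ ∘ₗ LinearMap.mulLeft B (a • (1 : R)) = a • φ :=
        Ψ.injective (by rw [hΨφ, map_smul, Ψ.apply_symm_apply])
      simpa using LinearMap.congr_fun ha r
    have hpairing : ⇑(mulPairing hA φ.isLinear) = Ψ.symm :=
      funext fun w => Ψ.eq_symm_apply.2 (hΨφ w)
    exact ⟨φ, hA, φ.isLinear, hpairing ▸ Ψ.symm.bijective⟩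
  · rintro ⟨φ, hA, hB, hφ⟩
    let e : R ≃ₗ[A] (R →ₗ[B] D) := LinearEquiv.ofBijective _ hφ
    refine ⟨e.symm, fun a f => ?_⟩
    obtain ⟨w, rfl⟩ := e.surjective f
    rw [e.symm_apply_apply, e.symm_apply_eq]
    exact LinearMap.ext fun r => congrArg φ (mul_assoc w a r).symm

variable [SMulCommClass A B D]

theorem exists_dual_linearEquiv_mulRight_iff :
    (∃ Φ : (R →ₗ[A] D) ≃ₗ[B] R, ∀ a f, Φ (f ∘ₗ LinearMap.mulRight A a) = a * Φ f) ↔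
      ∃ (φ : R → D) (hA : IsLinearMap A φ) (hB : IsLinearMap B φ),
        Bijective (mulPairing hA hB).flip := by
  constructor
  · rintro ⟨Φ, hΦ⟩
    let φ : R →ₗ[A] D := Φ.symm 1
    have hΦφ (w : R) : Φ (φ ∘ₗ LinearMap.mulRight A w) = w := by
      rw [hΦ, Φ.apply_symm_apply, mul_one]
    have hB : IsLinearMap B φ := by
      refine ⟨map_add φ, fun b r => ?_⟩
      have hb : φ ∘ₗ LinearMap.mulRight A (b • (1 : R)) = b • φ :=
        Φ.injective (by rw [hΦφ, map_smul, Φ.apply_symm_apply])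
      simpa using LinearMap.congr_fun hb r
    have hflip : ⇑(mulPairing φ.isLinear hB).flip = Φ.symm :=
      funext fun w => Φ.eq_symm_apply.2 (hΦφ w)
    exact ⟨φ, φ.isLinear, hB, hflip ▸ Φ.symm.bijective⟩
  · rintro ⟨φ, hA, hB, hφ⟩
    let e : R ≃ₗ[B] (R →ₗ[A] D) := LinearEquiv.ofBijective _ hφ
    refine ⟨e.symm, fun a f => ?_⟩
    obtain ⟨w, rfl⟩ := e.surjective f
    rw [e.symm_apply_apply, e.symm_apply_eq]
    exact LinearMap.ext fun r => congrArg φ (mul_assoc r a w)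

variable (A B D R) in
theorem reflexive_extension_symmetry_general :
    ((IsReflexiveWrt A B D R ∧
        ∃ Φ : (R →ₗ[A] D) ≃ₗ[B] R, ∀ a f, Φ (f ∘ₗ LinearMap.mulRight A a) = a * Φ f) ↔
      ∃ φ : R → D, IsReflexiveForm A B φ) ∧
    ((∃ φ : R → D, IsReflexiveForm A B φ) ↔
      (IsReflexiveWrt B A D R ∧
        ∃ Ψ : (R →ₗ[B] D) ≃ₗ[A] R, ∀ a f, Ψ (f ∘ₗ LinearMap.mulLeft B a) = Ψ f * a)) := by
  rw [exists_dual_linearEquiv_mulRight_iff, exists_dual_linearEquiv_mulLeft_iff]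
  refine ⟨⟨?_, ?_⟩, ⟨?_, ?_⟩⟩
  · rintro ⟨hR, φ, hA, hB, hl⟩
    exact ⟨φ, hA, hB, (isReflexiveWrt_iff_bijective_of_bijective_flip _ hl).1 hR, hl⟩
  · rintro ⟨φ, hA, hB, hr, hl⟩
    exact ⟨(isReflexiveWrt_iff_bijective_of_bijective_flip _ hl).2 hr, φ, hA, hB, hl⟩
  · rintro ⟨φ, hA, hB, hr, hl⟩
    exact ⟨(isReflexiveWrt_iff_bijective_of_bijective_flip (mulPairing hA hB).flip hr).2 hl,
      φ, hA, hB, hr⟩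
  · rintro ⟨hR, φ, hA, hB, hr⟩
    exact ⟨φ, hA, hB, hr,
      (isReflexiveWrt_iff_bijective_of_bijective_flip (mulPairing hA hB).flip hr).1 hR⟩

end MulPairing

section RingExtension

theorem isReflexiveMod_iff_isReflexiveWrt {S X : Type*} [Ring S] [AddCommGroup X]
    [Module S X] : IsReflexiveMod S X ↔ IsReflexiveWrt S Sᵐᵒᵖ S X :=
  Iff.rfl

theorem isReflexiveMod_op_iff_isReflexiveWrt {S X : Type*} [Ring S] [AddCommGroup X]
    [Module Sᵐᵒᵖ X] : IsReflexiveMod Sᵐᵒᵖ X ↔ IsReflexiveWrt Sᵐᵒᵖ S S X := by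
  let σ : S ≃+* Sᵐᵒᵖᵐᵒᵖ := RingEquiv.opOp S
  have := RingHomInvPair.of_ringEquiv σ
  have := RingHomInvPair.of_ringEquiv σ.symm
  let opS : S ≃ₛₗ[(σ : S →+* Sᵐᵒᵖᵐᵒᵖ)] Sᵐᵒᵖ :=
    { opAddEquiv with map_smul' := fun _ _ => rfl }
  let opDual : (X →ₗ[Sᵐᵒᵖ] S) ≃ₛₗ[(σ : S →+* Sᵐᵒᵖᵐᵒᵖ)] (X →ₗ[Sᵐᵒᵖ] Sᵐᵒᵖ) :=
    { (LinearEquiv.refl Sᵐᵒᵖ X).arrowCongrAddEquiv (opLinearEquiv Sᵐᵒᵖ) with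
      map_smul' := fun _ _ => rfl }
  let opBidual :
      ((X →ₗ[Sᵐᵒᵖ] S) →ₗ[S] S) ≃+ ((X →ₗ[Sᵐᵒᵖ] Sᵐᵒᵖ) →ₗ[Sᵐᵒᵖᵐᵒᵖ] Sᵐᵒᵖ) :=
    opDual.arrowCongrAddEquiv opS
  have hfactor : evalFun Sᵐᵒᵖ X = opBidual ∘ LinearMap.applyₗ' S := rfl
  rw [IsReflexiveMod, hfactor, opBidual.bijective.of_comp_iff', IsReflexiveWrt]

variable {S R : Type*} [Ring S] [Ring R] {θ : S →+* R}

theorem isLinearMap_iff_map_mul [Module S R] (hR : ∀ (s : S) (r : R), s • r = θ s * r)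
    {g : R → S} : IsLinearMap S g ↔
      (∀ a b : R, g (a + b) = g a + g b) ∧ ∀ (s : S) (r : R), g (θ s * r) = s * g r := by
  simp only [← hR]
  exact ⟨fun hg => ⟨hg.map_add, hg.map_smul⟩, fun hg => ⟨hg.1, hg.2⟩⟩

theorem isLinearMap_op_iff_map_mul [Module Sᵐᵒᵖ R]
    (hR' : ∀ (s : S) (r : R), op s • r = r * θ s) {g : R → S} :
    IsLinearMap Sᵐᵒᵖ g ↔
      (∀ a b : R, g (a + b) = g a + g b) ∧ ∀ (s : S) (r : R), g (r * θ s) = g r * s := by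
  simp only [← hR']
  exact ⟨fun hg => ⟨hg.map_add, fun s => hg.map_smul (op s)⟩,
    fun hg => ⟨hg.1, fun s => hg.2 s.unop⟩⟩

variable [Module S R] [Module Sᵐᵒᵖ R]

theorem exists_dual_linearEquiv_mulRight_iff_exists_bijective [IsScalarTower S R R]
    (hR' : ∀ (s : S) (r : R), op s • r = r * θ s) :
    (∃ Φ : (R →ₗ[S] S) ≃ₗ[Sᵐᵒᵖ] R, ∀ a f, Φ (f ∘ₗ LinearMap.mulRight S a) = a * Φ f) ↔
      ∃ Φ : (R →ₗ[S] S) → R, Bijective Φ ∧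
        (∀ f g : R →ₗ[S] S, Φ (f + g) = Φ f + Φ g) ∧
        (∀ (a : R) (f g : R →ₗ[S] S), (∀ r, g r = f (r * a)) → Φ g = a * Φ f) ∧
        (∀ (s : S) (f g : R →ₗ[S] S), (∀ r, g r = f r * s) → Φ g = Φ f * θ s) := by
  simp only [← hR']
  constructor
  · rintro ⟨Φ, hmul⟩
    refine ⟨Φ, Φ.bijective, map_add Φ, fun a f g hg => ?_, fun s f g hg => ?_⟩
    · rw [← hmul, LinearMap.ext hg (g := f ∘ₗ LinearMap.mulRight S a)]
    · rw [← map_smul, LinearMap.ext hg (g := op s • f)]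
  · rintro ⟨Φ, hbij, hadd, hmul, hsmul⟩
    have hlin : IsLinearMap Sᵐᵒᵖ Φ := ⟨hadd, fun s f => hsmul s.unop f _ fun _ => rfl⟩
    exact ⟨LinearEquiv.ofBijective (hlin.mk' Φ) hbij, fun a f => hmul a f _ fun _ => rfl⟩

theorem exists_dual_linearEquiv_mulLeft_iff_exists_bijective [SMulCommClass Sᵐᵒᵖ R R]
    (hR : ∀ (s : S) (r : R), s • r = θ s * r) :
    (∃ Ψ : (R →ₗ[Sᵐᵒᵖ] S) ≃ₗ[S] R, ∀ a f, Ψ (f ∘ₗ LinearMap.mulLeft Sᵐᵒᵖ a) = Ψ f * a) ↔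
      ∃ Ψ : (R →ₗ[Sᵐᵒᵖ] S) → R, Bijective Ψ ∧
        (∀ f g : R →ₗ[Sᵐᵒᵖ] S, Ψ (f + g) = Ψ f + Ψ g) ∧
        (∀ (s : S) (f g : R →ₗ[Sᵐᵒᵖ] S), (∀ r, g r = s * f r) → Ψ g = θ s * Ψ f) ∧
        (∀ (a : R) (f g : R →ₗ[Sᵐᵒᵖ] S), (∀ r, g r = f (a * r)) → Ψ g = Ψ f * a) := by
  simp only [← hR]
  constructor
  · rintro ⟨Ψ, hmul⟩
    refine ⟨Ψ, Ψ.bijective, map_add Ψ, fun s f g hg => ?_, fun a f g hg => ?_⟩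
    · rw [← map_smul, LinearMap.ext hg (g := s • f)]
    · rw [← hmul, LinearMap.ext hg (g := f ∘ₗ LinearMap.mulLeft Sᵐᵒᵖ a)]
  · rintro ⟨Ψ, hbij, hadd, hsmul, hmul⟩
    have hlin : IsLinearMap S Ψ := ⟨hadd, fun s f => hsmul s f _ fun _ => rfl⟩
    exact ⟨LinearEquiv.ofBijective (hlin.mk' Ψ) hbij, fun a f => hmul a f _ fun _ => rfl⟩

theorem isReflexiveHom_iff_isReflexiveForm [IsScalarTower S R R] [SMulCommClass Sᵐᵒᵖ R R]
    (hR : ∀ (s : S) (r : R), s • r = θ s * r)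
    (hR' : ∀ (s : S) (r : R), op s • r = r * θ s) {φ : R → S} :
    IsReflexiveHom θ φ ↔ IsReflexiveForm S Sᵐᵒᵖ φ := by
  simp only [IsReflexiveForm, bijective_iff_injective_and_forall_isLinearMap,
    isLinearMap_iff_map_mul hR, isLinearMap_op_iff_map_mul hR']
  constructor
  · rintro ⟨hadd, hleft, hright, hl_inj, hl_surj, hr_inj, hr_surj⟩
    exact ⟨⟨hadd, hleft⟩, ⟨hadd, hright⟩, ⟨hr_inj, hr_surj⟩, hl_inj, hl_surj⟩
  · rintro ⟨⟨hadd, hleft⟩, ⟨_, hright⟩, ⟨hr_inj, hr_surj⟩, hl_inj, hl_surj⟩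
    exact ⟨hadd, hleft, hright, hl_inj, hl_surj, hr_inj, hr_surj⟩

end RingExtension

theorem reflexive_extension_symmetry
    (S : Type u) (R : Type v) [Ring S] [Ring R] (θ : S →+* R)
    [Module S R] (hR : ∀ (s : S) (r : R), s • r = θ s * r)
    [Module Sᵐᵒᵖ R] (hR' : ∀ (s : S) (r : R), MulOpposite.op s • r = r * θ s) :
    -- (1) ↔ (2)
    (((IsReflexiveMod S R) ∧
      -- an R-S-bimodule isomorphism Hom_S(R,S) ≅ R
      ∃ Φ : (R →ₗ[S] S) → R, Function.Bijective Φ ∧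
        (∀ f g : R →ₗ[S] S, Φ (f + g) = Φ f + Φ g) ∧
        (∀ (a : R) (f g : R →ₗ[S] S), (∀ r, g r = f (r * a)) → Φ g = a * Φ f) ∧
        (∀ (s : S) (f g : R →ₗ[S] S), (∀ r, g r = f r * s) → Φ g = Φ f * θ s)) ↔
      (∃ φ : R → S, IsReflexiveHom θ φ)) ∧
    -- (2) ↔ (3)
    ((∃ φ : R → S, IsReflexiveHom θ φ) ↔
      ((IsReflexiveMod Sᵐᵒᵖ R) ∧
      -- an S-R-bimodule isomorphism Hom_{Sᵒᵖ}(R,S) ≅ R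
      ∃ Ψ : (R →ₗ[Sᵐᵒᵖ] S) → R, Function.Bijective Ψ ∧
        (∀ f g : R →ₗ[Sᵐᵒᵖ] S, Ψ (f + g) = Ψ f + Ψ g) ∧
        (∀ (s : S) (f g : R →ₗ[Sᵐᵒᵖ] S), (∀ r, g r = s * f r) → Ψ g = θ s * Ψ f) ∧
        (∀ (a : R) (f g : R →ₗ[Sᵐᵒᵖ] S), (∀ r, g r = f (a * r)) → Ψ g = Ψ f * a))) := by
  have : IsScalarTower S R R := ⟨fun s w r => by simp only [hR, smul_eq_mul, mul_assoc]⟩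
  have : SMulCommClass Sᵐᵒᵖ R R :=
    ⟨fun s w r => by rw [← op_unop s]; simp only [hR', smul_eq_mul, mul_assoc]⟩
  rw [isReflexiveMod_op_iff_isReflexiveWrt, isReflexiveMod_iff_isReflexiveWrt,
    ← exists_dual_linearEquiv_mulRight_iff_exists_bijective hR',
    ← exists_dual_linearEquiv_mulLeft_iff_exists_bijective hR]
  simp only [isReflexiveHom_iff_isReflexiveForm hR hR']
  exact reflexive_extension_symmetry_general S Sᵐᵒᵖ S R
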